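/- For every α : ℕ → {0,1,2}, Φ(α) = Φ(ρ(α)). -/

import Mathlib

open Filter

/-- `triN s` : numbering of the nodes of the ternary tree:
`N(⟨⟩) = 1`, `N(s * ⟨i⟩) = 2 * N(s) + i - 1`. -/
def triN (s : List (Fin 3)) : ℕ := s.foldl (fun a i => 2 * a + i.val - 1) 1

/-- Initial segment of length `n` of `α`. -/
def seg3 (α : ℕ → Fin 3) (n : ℕ) : List (Fin 3) := List.ofFn fun i : Fin n => α i

/-- `Phi α` is the limit of the Cauchy sequence `x_α^n = 2^(-(n+1)) * N(ᾱ n)`. -/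
noncomputable def Phi (α : ℕ → Fin 3) : ℝ :=
  limUnder atTop fun n => (triN (seg3 α n) : ℝ) / 2 ^ (n + 1)

/-- `rho3` is the identity on triples over `{0,1,2}` except on four patterns. -/
def rho3 : Fin 3 × Fin 3 × Fin 3 → Fin 3 × Fin 3 × Fin 3 := fun t =>
  if t = (1, 2, 2) then (2, 0, 2)
  else if t = (1, 0, 0) then (0, 2, 0)
  else if t = (0, 2, 2) then (1, 0, 2)
  else if t = (2, 0, 0) then (1, 2, 0)
  else t

/-- The auxiliary triples `σ^n_α`. -/
def sigAux (α : ℕ → Fin 3) : ℕ → Fin 3 × Fin 3 × Fin 3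
  | 0 => rho3 (α 0, α 1, α 2)
  | n + 1 => rho3 ((sigAux α n).2.1, α (n + 2), α (n + 3))

/-- The map `ρ : {0,1,2}^ℕ → {0,1,2}^ℕ`, `ρ(α)(n) = (σ^n_α)₀`. -/
def rho (α : ℕ → Fin 3) (n : ℕ) : Fin 3 := (sigAux α n).1

theorem seg3_succ (α : ℕ → Fin 3) (n : ℕ) : seg3 α (n + 1) = seg3 α n ++ [α n] := by
  unfold seg3
  rw [List.ofFn_succ']
  simp

theorem triN_succ (α : ℕ → Fin 3) (n : ℕ) :
    triN (seg3 α (n + 1)) = 2 * triN (seg3 α n) + (α n).val - 1 := by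
  rw [seg3_succ]
  simp [triN]

theorem triN_pos (α : ℕ → Fin 3) (n : ℕ) : 1 ≤ triN (seg3 α n) := by
  induction n with
  | zero => simp [seg3, triN]
  | succ n ih => rw [triN_succ]; omega

theorem triN_succ_real (α : ℕ → Fin 3) (n : ℕ) :
    (triN (seg3 α (n + 1)) : ℝ) = 2 * triN (seg3 α n) + ((α n).val : ℝ) - 1 := by
  have h := triN_succ α n
  have h1 := triN_pos α n
  have h2 : triN (seg3 α (n + 1)) + 1 = 2 * triN (seg3 α n) + (α n).val := by omega
  have h3 : ((triN (seg3 α (n + 1)) + 1 : ℕ) : ℝ) = (2 * triN (seg3 α n) + (α n).val : ℕ) := by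
    rw [h2]
  push_cast at h3
  linarith

theorem rho3_inv : ∀ a b c : Fin 3,
    2 * (rho3 (a, b, c)).1.val + (rho3 (a, b, c)).2.1.val = 2 * a.val + b.val := by
  decide

theorem rho_inv (α : ℕ → Fin 3) (n : ℕ) :
    4 * triN (seg3 (rho α) n) + 2 * (sigAux α n).1.val + (sigAux α n).2.1.val
      = triN (seg3 α (n + 2)) + 3 := by
  induction n with
  | zero =>
    have h := rho3_inv (α 0) (α 1) (α 2)
    have h1 := triN_succ α 0
    have h2 := triN_succ α 1
    have e0 : ∀ β, triN (seg3 β 0) = 1 := fun β => by simp [seg3, triN]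
    rw [e0] at h1 ⊢
    simp only [sigAux, zero_add] at *
    norm_num at *
    omega
  | succ n ih =>
    have h := rho3_inv (sigAux α n).2.1 (α (n + 2)) (α (n + 3))
    have h1 := triN_succ α (n + 2)
    have h2 := triN_succ (rho α) n
    have h3 := triN_pos α (n + 2)
    have h4 := triN_pos (rho α) n
    have e : n + 1 + 2 = n + 2 + 1 := by omega
    rw [e]
    simp only [sigAux, rho] at *
    omega

theorem Phi_tendsto (α : ℕ → Fin 3) :
    Tendsto (fun n => (triN (seg3 α n) : ℝ) / 2 ^ (n + 1)) atTop (nhds (Phi α)) := by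
  apply CauchySeq.tendsto_limUnder
  apply cauchySeq_of_le_geometric_two (C := 1)
  intro n
  rw [triN_succ_real, Real.dist_eq]
  have hv : ((α n).val : ℝ) ≤ 2 := by
    have := (α n).isLt
    exact_mod_cast (by omega : (α n).val ≤ 2)
  have h0 : (0 : ℝ) ≤ ((α n).val : ℝ) := Nat.cast_nonneg _
  have e : (triN (seg3 α n) : ℝ) / 2 ^ (n + 1)
      - (2 * triN (seg3 α n) + ((α n).val : ℝ) - 1) / 2 ^ (n + 1 + 1)
      = ((1 - ((α n).val : ℝ)) / 2) * (1 / 2 / 2 ^ n) := by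
    field_simp
    ring
  rw [e, abs_mul, abs_of_nonneg (by positivity : (0 : ℝ) ≤ 1 / 2 / 2 ^ n)]
  have : |(1 - ((α n).val : ℝ)) / 2| ≤ 1 := by
    rw [abs_le]; constructor <;> linarith
  exact mul_le_of_le_one_left (by positivity) this

theorem stmt7 (α : ℕ → Fin 3) : Phi α = Phi (rho α) := by
  have hA := (tendsto_add_atTop_iff_nat 2).2 (Phi_tendsto α)
  have hB := Phi_tendsto (rho α)
  have hD := hA.sub hB
  have hZ : Tendsto (fun n : ℕ => (3 : ℝ) * (1 / 2) ^ n) atTop (nhds 0) := by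
    have := (tendsto_pow_atTop_nhds_zero_of_lt_one (r := (1 / 2 : ℝ))
      (by norm_num) (by norm_num)).const_mul 3
    simpa using this
  refine sub_eq_zero.1 (tendsto_nhds_unique hD (squeeze_zero_norm (fun n => ?_) hZ))
  · have h := rho_inv α n
    have b1 := (sigAux α n).1.isLt
    have b2 := (sigAux α n).2.1.isLt
    have l1 : triN (seg3 α (n + 2)) ≤ 4 * triN (seg3 (rho α) n) + 3 := by omega
    have l2 : 4 * triN (seg3 (rho α) n) ≤ triN (seg3 α (n + 2)) + 3 := by omega
    have r1 : (triN (seg3 α (n + 2)) : ℝ) ≤ 4 * triN (seg3 (rho α) n) + 3 := by exact_mod_cast l1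
    have r2 : 4 * (triN (seg3 (rho α) n) : ℝ) ≤ triN (seg3 α (n + 2)) + 3 := by exact_mod_cast l2
    have e : (triN (seg3 α (n + 2)) : ℝ) / 2 ^ (n + 2 + 1)
        - (triN (seg3 (rho α) n) : ℝ) / 2 ^ (n + 1)
        = ((triN (seg3 α (n + 2)) : ℝ) - 4 * triN (seg3 (rho α) n)) / 8 * (1 / 2) ^ n := by
      rw [one_div, inv_pow]
      field_simp
      ring
    rw [e, Real.norm_eq_abs, abs_mul, abs_of_nonneg (by positivity : (0 : ℝ) ≤ (1 / 2) ^ n)]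
    apply mul_le_mul_of_nonneg_right _ (by positivity)
    rw [abs_le]; constructor <;> linarith
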